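/- Let F and G be analytic on the open unit disk 𝔻 with F(0) = G(0). Suppose H(z) = zG'(z) is starlike univalent on 𝔻 (i.e., H is univalent with H(0)=0, H'(0)≠0, and Re(zH'(z)/H(z)) > 0), and zF'(z) is subordinate to zG'(z) on 𝔻. Then F is subordinate to G on 𝔻. -/

import Mathlib

open Complex Metric

/-- `f` is subordinate to `g` on the unit disk. -/
def Subord (f g : ℂ → ℂ) : Prop :=
  ∃ w : ℂ → ℂ, DifferentiableOn ℂ w (ball (0 : ℂ) 1) ∧ w 0 = 0 ∧
    (∀ z ∈ ball (0 : ℂ) 1, w z ∈ ball (0 : ℂ) 1) ∧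
    ∀ z ∈ ball (0 : ℂ) 1, f z = g (w z)

/-!
Write `H(z) = z G'(z)`. On the starlike domain `H(𝔻)` the function `G ∘ H⁻¹` has derivative
`G' / H'` of positive real part, so `(G - G(0)) / H` has positive real part; hence `G - G(0)` is
starlike and `G` is univalent. To lift `F` through `G` to the whole disk it is enough to bound
`|w(z)| ≤ |z|` for every partial lift `w = G⁻¹ ∘ F`. If the bound failed, Jack's lemma would give a
point `z₀` with `|w(z₀)| > |z₀|` and `z₀ w'(z₀) = k w(z₀)`, `k ≥ 1`. With `z F'(z) = H(ω(z))` this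
reads `k H(w(z₀)) = H(ω(z₀))`, and starlikeness of `H` forces `|w(z₀)| ≤ |ω(z₀)| ≤ |z₀|`.
-/

open Set Filter Topology ComplexConjugate

section ComplexDerivatives

lemma re_div_pos_iff {a b : ℂ} : 0 < (a / b).re ↔ 0 < (a * conj b).re := by
  rcases eq_or_ne b 0 with rfl | hb
  · simp only [div_zero, map_zero, mul_zero]
  · have hquot : (a / b).re = (a * conj b).re / normSq b := by
      simp only [div_re, mul_re, conj_re, conj_im]
      ring
    rw [hquot, div_pos_iff_of_pos_right (normSq_pos.2 hb)]

lemma re_div_pos_comm {a b : ℂ} : 0 < (a / b).re ↔ 0 < (b / a).re := by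
  rw [re_div_pos_iff, re_div_pos_iff, ← conj_re, map_mul, conj_conj, mul_comm]

/- The mean value theorem applied to `Re (L · conj (a - b))`, whose derivative in the direction
`a - b` is `Re L' · |a - b|²`. -/
lemma re_sub_mul_conj_sub_pos {L L' : ℂ → ℂ} {a b : ℂ} (hab : a ≠ b)
    (hL : ∀ z ∈ segment ℝ b a, HasDerivAt L (L' z) z)
    (hpos : ∀ z ∈ segment ℝ b a, 0 < (L' z).re) :
    0 < ((L a - L b) * conj (a - b)).re := by
  have hderiv (z) (hz : z ∈ segment ℝ b a) :=
    (reCLM.hasFDerivAt.comp z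
      (((hL z hz).mul_const (conj (a - b))).hasFDerivAt.restrictScalars ℝ)).hasFDerivWithinAt
      (s := segment ℝ b a)
  obtain ⟨z, hz, hmvt⟩ := domain_mvt hderiv (convex_segment b a)
    (left_mem_segment ℝ b a) (right_mem_segment ℝ b a)
  have hincr : ((L a - L b) * conj (a - b)).re = (L' z).re * normSq (a - b) := by
    rw [← re_mul_ofReal, normSq_eq_conj_mul_self, sub_mul, sub_re]
    refine hmvt.trans ?_
    simp [mul_comm, mul_left_comm]
  rw [hincr]
  exact mul_pos (hpos z hz) (normSq_pos.2 (sub_ne_zero.2 hab))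

lemma exists_eq_ofReal_nonneg_of_isLocalMaxOn_re {ψ : ℂ → ℂ} {c a : ℂ} (hψ : HasDerivAt ψ c a)
    (hmax : IsLocalMaxOn (fun ζ => (ψ ζ).re) {ζ | ζ.re ≤ a.re} a) :
    ∃ m : ℝ, 0 ≤ m ∧ c = m := by
  have hfderiv := (reCLM.hasFDerivAt.comp a (hψ.hasFDerivAt.restrictScalars ℝ)).hasFDerivWithinAt
    (s := {ζ | ζ.re ≤ a.re})
  have hdir (v : ℂ) (hv : v.re ≤ 0) : (v * c).re ≤ 0 := by
    have hseg : segment ℝ a (a + v) ⊆ {ζ | ζ.re ≤ a.re} :=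
      (convex_halfSpace_re_le a.re).segment_subset (le_refl a.re) (by simpa using hv)
    simpa using hmax.hasFDerivWithinAt_nonpos hfderiv (mem_posTangentConeAt_of_segment_subset hseg)
  have hneg : 0 ≤ c.re := by simpa using hdir (-1) (by simp)
  have hI : 0 ≤ c.im := by simpa using hdir I (by simp)
  have hnegI : c.im ≤ 0 := by simpa using hdir (-I) (by simp)
  exact ⟨c.re, hneg, Complex.ext rfl (le_antisymm hnegI hI)⟩

lemma deriv_eq_dslope_add {𝕜 E : Type*} [NontriviallyNormedField 𝕜] [NormedAddCommGroup E]
    [NormedSpace 𝕜 E] {f : 𝕜 → E} {a z : 𝕜} (hf : DifferentiableAt 𝕜 (dslope f a) z) :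
    deriv f z = dslope f a z + (z - a) • deriv (dslope f a) z := by
  have hfactor : f = fun x => (x - a) • dslope f a x + f a := by
    funext x
    rw [sub_smul_dslope, sub_add_cancel]
  have hprod := (((hasDerivAt_id' z).sub_const a).fun_smul hf.hasDerivAt).add_const (f a)
  rw [← hfactor, one_smul, add_comm] at hprod
  exact hprod.deriv

lemma exists_hasDerivAt_logDeriv_and_exp_eq {g : ℂ → ℂ} {c : ℂ} {r : ℝ}
    (hg : DifferentiableOn ℂ g (ball c r)) (hne : ∀ z ∈ ball c r, g z ≠ 0) :
    ∃ h : ℂ → ℂ, ∀ z ∈ ball c r, HasDerivAt h (logDeriv g z) z ∧ exp (h z) = g z := by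
  obtain ⟨h, hc, hh⟩ :=
    ((hg.deriv isOpen_ball).div hg hne).isExactOn_ball.with_val_at c (log (g c))
  refine ⟨h, fun z hz => ⟨hh z hz, ?_⟩⟩
  have hcball : c ∈ ball c r := mem_ball_self (pos_of_mem_ball hz)
  have hquot (x) (hx : x ∈ ball c r) : HasDerivAt (fun x => g x * exp (-h x)) 0 x := by
    have hgx := (hg.differentiableAt (isOpen_ball.mem_nhds hx)).hasDerivAt
    refine (hgx.mul (hh x hx).neg.cexp).congr_deriv ?_
    have := hne x hx
    simp only [Pi.div_apply]
    field_simp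
    ring
  have hconst : g z * exp (-h z) = g c * exp (-h c) :=
    isOpen_ball.is_const_of_deriv_eq_zero (convex_ball c r).isPreconnected
      (fun x hx => (hquot x hx).differentiableAt.differentiableWithinAt)
      (fun x hx => (hquot x hx).deriv) hz hcball
  rw [hc, exp_neg, exp_neg, exp_log (hne c hcball), mul_inv_cancel₀ (hne c hcball),
    mul_inv_eq_one₀ (exp_ne_zero _)] at hconst
  exact hconst.symm

end ComplexDerivatives

section Jack

lemma exists_nonneg_mul_deriv_eq_of_isMaxOn_norm {v : ℂ → ℂ} {z₀ : ℂ}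
    (hv : DifferentiableAt ℂ v z₀) (hv₀ : v z₀ ≠ 0)
    (hmax : IsMaxOn (norm ∘ v) (closedBall 0 ‖z₀‖) z₀) :
    ∃ m : ℝ, 0 ≤ m ∧ z₀ * deriv v z₀ = m * v z₀ := by
  -- `ζ ↦ z₀ e^ζ` carries the left half-plane into the disk `|z| ≤ |z₀|`.
  have hψ : HasDerivAt (fun ζ => v (z₀ * exp ζ) / v z₀) (z₀ * deriv v z₀ / v z₀) 0 := by
    have hpolar : HasDerivAt (fun ζ => z₀ * exp ζ) z₀ 0 := by
      simpa using (hasDerivAt_exp 0).const_mul z₀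
    have hv' : HasDerivAt v (deriv v z₀) (z₀ * exp 0) := by simpa using hv.hasDerivAt
    rw [mul_comm z₀ (deriv v z₀)]
    exact (hv'.comp 0 hpolar).div_const (v z₀)
  have hψmax : IsMaxOn (fun ζ => (v (z₀ * exp ζ) / v z₀).re) {ζ | ζ.re ≤ (0 : ℂ).re} 0 := by
    intro ζ hζ
    have hball : z₀ * exp ζ ∈ closedBall 0 ‖z₀‖ := by
      rw [mem_closedBall_zero_iff, norm_mul, norm_exp]
      exact mul_le_of_le_one_right (norm_nonneg _) (Real.exp_le_one_iff.2 hζ)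
    calc (v (z₀ * exp ζ) / v z₀).re ≤ ‖v (z₀ * exp ζ) / v z₀‖ := re_le_norm _
      _ ≤ 1 := by
        rw [norm_div]
        exact div_le_one_of_le₀ (hmax hball) (norm_nonneg _)
      _ = (v (z₀ * exp 0) / v z₀).re := by rw [exp_zero, mul_one, div_self hv₀, one_re]
  obtain ⟨m, hm, hquot⟩ := exists_eq_ofReal_nonneg_of_isLocalMaxOn_re hψ hψmax.localize
  exact ⟨m, hm, (div_eq_iff hv₀).1 hquot⟩

/- **Jack's lemma**, with `z₀` a maximum point of `|w(ζ) / ζ|` on the disk `|ζ| ≤ |z|`. -/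
lemma exists_norm_lt_and_mul_deriv_eq {w : ℂ → ℂ} {r : ℝ} {z : ℂ}
    (hw : DifferentiableOn ℂ w (ball 0 r)) (hw₀ : w 0 = 0) (hz : z ∈ ball 0 r)
    (hlt : ‖z‖ < ‖w z‖) :
    ∃ z₀ ∈ ball 0 r, ‖z₀‖ < ‖w z₀‖ ∧ ∃ k : ℝ, 1 ≤ k ∧ z₀ * deriv w z₀ = k * w z₀ := by
  have hr : 0 < r := pos_of_mem_ball hz
  have hv : DifferentiableOn ℂ (dslope w 0) (ball 0 r) :=
    (differentiableOn_dslope (ball_mem_nhds 0 hr)).2 hw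
  have hwv (x : ℂ) : w x = x * dslope w 0 x := by
    simpa using (sub_smul_dslope_of_zero hw₀ x).symm
  have hz0 : z ≠ 0 := by
    rintro rfl
    simp [hw₀] at hlt
  have hsub : closedBall (0 : ℂ) ‖z‖ ⊆ ball 0 r := closedBall_subset_ball (by simpa using hz)
  obtain ⟨z₀, hz₀, hmax⟩ := exists_mem_frontier_isMaxOn_norm isBounded_ball
    (nonempty_ball.2 (norm_pos_iff.2 hz0)) (hv.diffContOnCl_ball hsub)
  rw [frontier_ball _ (norm_ne_zero_iff.2 hz0), mem_sphere_zero_iff_norm] at hz₀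
  rw [closure_ball _ (norm_ne_zero_iff.2 hz0), ← hz₀] at hmax
  have hz₀ball : z₀ ∈ ball 0 r := hsub (by simp [hz₀])
  have hone : 1 < ‖dslope w 0 z₀‖ := by
    have hz1 : 1 < ‖dslope w 0 z‖ := by
      rwa [hwv z, norm_mul, lt_mul_iff_one_lt_right (norm_pos_iff.2 hz0)] at hlt
    exact hz1.trans_le (hmax (by simp [hz₀]))
  have hvd := hv.differentiableAt (isOpen_ball.mem_nhds hz₀ball)
  obtain ⟨m, hm, hmul⟩ := exists_nonneg_mul_deriv_eq_of_isMaxOn_norm hvd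
    (norm_pos_iff.1 (one_pos.trans hone)) hmax
  refine ⟨z₀, hz₀ball, ?_, 1 + m, by linarith, ?_⟩
  · rw [hwv z₀, norm_mul]
    exact lt_mul_of_one_lt_right (hz₀ ▸ norm_pos_iff.2 hz0) hone
  · rw [deriv_eq_dslope_add hvd, hwv z₀, sub_zero, smul_eq_mul, hmul]
    push_cast
    ring

end Jack

section Lifts

variable {G : ℂ → ℂ} {U : Set ℂ}

lemma isOpen_image_of_deriv_ne_zero (hU : IsOpen U) (hG : DifferentiableOn ℂ G U)
    (hG' : ∀ z ∈ U, deriv G z ≠ 0) : IsOpen (G '' U) := by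
  rw [isOpen_iff_mem_nhds]
  rintro _ ⟨z, hz, rfl⟩
  rw [← (hG.analyticAt (hU.mem_nhds hz)).hasStrictDerivAt.map_nhds_eq (hG' z hz)]
  exact image_mem_map (hU.mem_nhds hz)

lemma hasDerivAt_invFunOn (hU : IsOpen U) (hG : DifferentiableOn ℂ G U) (hinj : InjOn G U)
    {z : ℂ} (hz : z ∈ U) (hG' : deriv G z ≠ 0) :
    HasDerivAt (Function.invFunOn G U) (deriv G z)⁻¹ (G z) :=
  ((hG.analyticAt (hU.mem_nhds hz)).hasStrictDerivAt.to_local_left_inverse hG' <| by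
    filter_upwards [hU.mem_nhds hz] with x hx using hinj.leftInvOn_invFunOn hx).hasDerivAt

lemma exists_lift {E : Type*} [NormedAddCommGroup E] [NormedSpace ℂ E] {F : E → ℂ} {s : Set E}
    (hU : IsOpen U) (hG : DifferentiableOn ℂ G U) (hinj : InjOn G U)
    (hG' : ∀ z ∈ U, deriv G z ≠ 0) (hF : DifferentiableOn ℂ F s) (hmaps : MapsTo F s (G '' U))
    {a : E} {b : ℂ} (hb : b ∈ U) (hab : F a = G b) :
    ∃ w : E → ℂ, DifferentiableOn ℂ w s ∧ MapsTo w s U ∧ w a = b ∧ ∀ z ∈ s, G (w z) = F z := by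
  refine ⟨Function.invFunOn G U ∘ F, fun z hz => ?_, fun z hz => Function.invFunOn_mem (hmaps hz),
    ?_, fun z hz => Function.invFunOn_eq (hmaps hz)⟩
  · obtain ⟨u, hu, huz⟩ := hmaps hz
    have hinv := hasDerivAt_invFunOn hU hG hinj hu (hG' u hu)
    rw [huz] at hinv
    exact hinv.differentiableAt.comp_differentiableWithinAt z (hF z hz)
  · rw [Function.comp_apply, hab]
    exact hinj.leftInvOn_invFunOn hb

end Lifts

section Continuation

variable {F G : ℂ → ℂ}

lemma mapsTo_closedBall_image_of_forall_lift_norm_le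
    (hF : DifferentiableOn ℂ F (ball 0 1)) (hG : DifferentiableOn ℂ G (ball 0 1))
    (hinj : InjOn G (ball 0 1)) (hG' : ∀ z ∈ ball 0 1, deriv G z ≠ 0) (h0 : F 0 = G 0)
    {r : ℝ} (hr0 : 0 < r) (hr1 : r < 1) (hmaps : MapsTo F (ball 0 r) (G '' ball 0 1))
    (hlift : ∀ w : ℂ → ℂ, DifferentiableOn ℂ w (ball 0 r) → MapsTo w (ball 0 r) (ball 0 1) →
      w 0 = 0 → (∀ z ∈ ball 0 r, G (w z) = F z) → ∀ z ∈ ball 0 r, ‖w z‖ ≤ ‖z‖) :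
    MapsTo F (closedBall 0 r) (G '' ball 0 1) := by
  obtain ⟨w, hw, hwmaps, hw0, hGw⟩ := exists_lift isOpen_ball hG hinj hG'
    (hF.mono (ball_subset_ball hr1.le)) hmaps (mem_ball_self one_pos) h0
  have hwle := hlift w hw hwmaps hw0 hGw
  have hsub : closedBall (0 : ℂ) r ⊆ ball 0 1 := closedBall_subset_ball hr1
  have hcompact : IsCompact (G '' closedBall 0 r) :=
    (isCompact_closedBall 0 r).image_of_continuousOn (hG.continuousOn.mono hsub)
  have hopen : MapsTo F (ball 0 r) (G '' closedBall 0 r) := fun z hz =>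
    ⟨w z, mem_closedBall_zero_iff.2 ((hwle z hz).trans (mem_ball_zero_iff.1 hz).le), hGw z hz⟩
  have hclosed := hopen.closure_of_continuousOn
    (by simpa only [closure_ball _ hr0.ne'] using hF.continuousOn.mono hsub)
  rw [closure_ball _ hr0.ne', hcompact.isClosed.closure_eq] at hclosed
  exact hclosed.mono_right (image_mono hsub)

/- A point of least modulus at which `F` leaves `G '' ball 0 1` would lie on the boundary of a disk
on which `F` lifts, and the assumed bound keeps that lift in a compact subset of the unit disk. -/
lemma subord_of_forall_lift_norm_le
    (hF : DifferentiableOn ℂ F (ball 0 1)) (hG : DifferentiableOn ℂ G (ball 0 1))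
    (hinj : InjOn G (ball 0 1)) (hG' : ∀ z ∈ ball 0 1, deriv G z ≠ 0) (h0 : F 0 = G 0)
    (hlift : ∀ r < 1, ∀ w : ℂ → ℂ, DifferentiableOn ℂ w (ball 0 r) →
      MapsTo w (ball 0 r) (ball 0 1) → w 0 = 0 → (∀ z ∈ ball 0 r, G (w z) = F z) →
      ∀ z ∈ ball 0 r, ‖w z‖ ≤ ‖z‖) :
    Subord F G := by
  have h0ball : (0 : ℂ) ∈ ball 0 1 := mem_ball_self one_pos
  have hmaps : MapsTo F (ball 0 1) (G '' ball 0 1) := by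
    by_contra hnot
    obtain ⟨z₁, hz₁, hFz₁⟩ := not_subset.1 hnot
    have hVopen : IsOpen (ball 0 1 ∩ F ⁻¹' (G '' ball 0 1)) :=
      hF.continuousOn.isOpen_inter_preimage isOpen_ball
        (isOpen_image_of_deriv_ne_zero isOpen_ball hG hG')
    obtain ⟨z₀, ⟨hz₀ball, hz₀V⟩, hmin⟩ :=
      ((isCompact_closedBall (0 : ℂ) ‖z₁‖).diff hVopen).exists_isMinOn
        ⟨z₁, by simp, fun h => hFz₁ h.2⟩ continuous_norm.continuousOn
    rw [mem_closedBall_zero_iff] at hz₀ball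
    have hz₀lt : ‖z₀‖ < 1 := hz₀ball.trans_lt (mem_ball_zero_iff.1 hz₁)
    have hz₀ : z₀ ≠ 0 := by
      rintro rfl
      exact hz₀V ⟨h0ball, 0, h0ball, h0.symm⟩
    have hmaps₀ : MapsTo F (ball 0 ‖z₀‖) (G '' ball 0 1) := by
      intro z hz
      rw [mem_ball_zero_iff] at hz
      by_contra hFz
      exact hz.not_ge (hmin ⟨by simpa using hz.le.trans hz₀ball, fun h => hFz h.2⟩)
    exact hz₀V ⟨mem_ball_zero_iff.2 hz₀lt,
      mapsTo_closedBall_image_of_forall_lift_norm_le hF hG hinj hG' h0 (norm_pos_iff.2 hz₀) hz₀lt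
        hmaps₀ (hlift _ hz₀lt) (by simp)⟩
  obtain ⟨w, hw, hwmaps, hw0, hGw⟩ := exists_lift isOpen_ball hG hinj hG' hF hmaps h0ball h0
  exact ⟨w, hw, hw0, hwmaps, fun z hz => (hGw z hz).symm⟩

lemma Subord.exists_norm_le {f g : ℂ → ℂ} (h : Subord f g) {z : ℂ} (hz : z ∈ ball 0 1) :
    ∃ u, ‖u‖ ≤ ‖z‖ ∧ f z = g u := by
  obtain ⟨w, hw, hw0, hmaps, hfg⟩ := h
  exact ⟨w z, norm_le_norm_of_mapsTo_ball hw (fun x hx => ball_subset_closedBall (hmaps x hx)) hw0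
    (mem_ball_zero_iff.1 hz), hfg z hz⟩

end Continuation

/-- Starlike functions on the unit disk, by their analytic description. Univalence is not a field:
it follows from the others (`IsStarlike.injOn`). Since `x / 0 = 0`, the field `re_pos` also says
that `f` vanishes only at `0`. -/
structure IsStarlike (f : ℂ → ℂ) : Prop where
  differentiableOn : DifferentiableOn ℂ f (ball 0 1)
  map_zero : f 0 = 0
  deriv_zero_ne_zero : deriv f 0 ≠ 0
  re_pos : ∀ z ∈ ball 0 1, z ≠ 0 → 0 < (z * deriv f z / f z).re

namespace IsStarlike

variable {f : ℂ → ℂ} {w u z : ℂ} {c : ℝ}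

lemma ne_zero (hf : IsStarlike f) (hz : z ∈ ball 0 1) (hz0 : z ≠ 0) : f z ≠ 0 := by
  intro h
  simpa [h] using hf.re_pos z hz hz0

lemma deriv_ne_zero (hf : IsStarlike f) (hz : z ∈ ball 0 1) : deriv f z ≠ 0 := by
  rcases eq_or_ne z 0 with rfl | hz0
  · exact hf.deriv_zero_ne_zero
  · intro h
    simpa [h] using hf.re_pos z hz hz0

lemma exists_log_comp_exp (hf : IsStarlike f) :
    ∃ L : ℂ → ℂ,
      (∀ ζ : ℂ, ζ.re < 0 → HasDerivAt L (exp ζ * deriv f (exp ζ) / f (exp ζ)) ζ) ∧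
      (∀ ζ : ℂ, ζ.re < 0 → exp (L ζ) = f (exp ζ)) ∧
      ∀ (ζ : ℂ) (n : ℤ), L (ζ + n * (2 * Real.pi * I)) = L ζ + n * (2 * Real.pi * I) := by
  have hg : DifferentiableOn ℂ (dslope f 0) (ball 0 1) :=
    (differentiableOn_dslope (ball_mem_nhds 0 one_pos)).2 hf.differentiableOn
  have hfg (z : ℂ) : f z = z * dslope f 0 z := by
    simpa using (sub_smul_dslope_of_zero hf.map_zero z).symm
  have hgne (z) (hz : z ∈ ball 0 1) : dslope f 0 z ≠ 0 := by
    rcases eq_or_ne z 0 with rfl | hz0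
    · simpa only [dslope_same] using hf.deriv_zero_ne_zero
    · exact right_ne_zero_of_mul (hfg z ▸ hf.ne_zero hz hz0)
  obtain ⟨h, hh⟩ := exists_hasDerivAt_logDeriv_and_exp_eq hg hgne
  have hball {ζ : ℂ} (hζ : ζ.re < 0) : exp ζ ∈ ball 0 1 := by
    simpa [norm_exp] using hζ
  refine ⟨fun ζ => ζ + h (exp ζ), fun ζ hζ => ?_, fun ζ hζ => ?_, fun ζ n => ?_⟩
  · have hderiv := (hasDerivAt_id ζ).add ((hh _ (hball hζ)).1.comp ζ (hasDerivAt_exp ζ))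
    refine hderiv.congr_deriv ?_
    have hne := hgne _ (hball hζ)
    rw [deriv_eq_dslope_add (hg.differentiableAt (isOpen_ball.mem_nhds (hball hζ))), hfg,
      logDeriv_apply, sub_zero, smul_eq_mul]
    field_simp [exp_ne_zero]
  · rw [exp_add, (hh _ (hball hζ)).2, hfg]
  · simp only [exp_periodic.int_mul n ζ]
    ring

/- In logarithmic coordinates `ζ = log z` the function `L = log f(e^ζ)` has derivative `z f' / f`,
so `Re ((L a - L b) conj (a - b)) > 0`; here `L a - L b = log c` is real. -/
lemma log_mul_log_norm_sub_pos (hf : IsStarlike f) (hw : w ∈ ball 0 1) (hu : u ∈ ball 0 1)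
    (hw0 : w ≠ 0) (hu0 : u ≠ 0) (hwu : w ≠ u) (hc : 0 < c) (h : f w = c * f u) :
    0 < Real.log c * (Real.log ‖w‖ - Real.log ‖u‖) := by
  obtain ⟨L, hL, hexp, hper⟩ := hf.exists_log_comp_exp
  have hlog {x : ℂ} (hx : x ∈ ball 0 1) (hx0 : x ≠ 0) : (log x).re < 0 := by
    rw [log_re]
    exact Real.log_neg (norm_pos_iff.2 hx0) (mem_ball_zero_iff.1 hx)
  have hexpL : exp (L (log w)) = exp (Real.log c + L (log u)) := by
    rw [exp_add, hexp _ (hlog hw hw0), hexp _ (hlog hu hu0), exp_log hw0, exp_log hu0,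
      ← ofReal_exp, Real.exp_log hc, h]
  obtain ⟨n, hn⟩ := exp_eq_exp_iff_exists_int.1 hexpL
  set a := log w with ha
  set b := log u + n * (2 * Real.pi * I) with hb
  have hbre : b.re = (log u).re := by simp [hb]
  have hLab : L a - L b = Real.log c := by
    rw [hn, hb, hper]
    ring
  have hab : a ≠ b := by
    intro hab
    have hexpab := congrArg exp hab
    rw [ha, hb, exp_log hw0, exp_periodic.int_mul n (log u), exp_log hu0] at hexpab
    exact hwu hexpab
  have hseg : segment ℝ b a ⊆ {ζ | ζ.re < 0} :=
    (convex_halfSpace_re_lt 0).segment_subset (hbre.trans_lt (hlog hu hu0)) (hlog hw hw0)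
  have hpos := re_sub_mul_conj_sub_pos hab (fun ζ hζ => hL ζ (hseg hζ)) fun ζ hζ =>
    hf.re_pos (exp ζ) (by simpa [norm_exp] using hseg hζ) (exp_ne_zero ζ)
  rwa [hLab, re_ofReal_mul, conj_re, sub_re, hbre, ha, log_re, log_re] at hpos

lemma injOn (hf : IsStarlike f) : InjOn f (ball 0 1) := by
  intro w hw u hu hwu
  rcases eq_or_ne w 0 with rfl | hw0
  · by_contra hne
    exact hf.ne_zero hu (Ne.symm hne) (hwu ▸ hf.map_zero)
  rcases eq_or_ne u 0 with rfl | hu0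
  · exact absurd (hwu.trans hf.map_zero) (hf.ne_zero hw hw0)
  by_contra hne
  simpa using hf.log_mul_log_norm_sub_pos hw hu hw0 hu0 hne one_pos (by simpa using hwu)

lemma norm_le_of_eq_mul (hf : IsStarlike f) (hw : w ∈ ball 0 1) (hu : u ∈ ball 0 1)
    (hc0 : 0 < c) (hc1 : c ≤ 1) (h : f w = c * f u) : ‖w‖ ≤ ‖u‖ := by
  rcases eq_or_ne w 0 with rfl | hw0
  · simp only [norm_zero, norm_nonneg]
  have hu0 : u ≠ 0 := by
    rintro rfl
    exact hf.ne_zero hw hw0 (by rw [h, hf.map_zero, mul_zero])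
  rcases eq_or_ne w u with rfl | hwu
  · rfl
  have hpos := hf.log_mul_log_norm_sub_pos hw hu hw0 hu0 hwu hc0 h
  have hlog := neg_of_mul_pos_right hpos (Real.log_nonpos hc0.le hc1)
  exact ((Real.log_lt_log_iff (norm_pos_iff.2 hw0) (norm_pos_iff.2 hu0)).1 (sub_neg.1 hlog)).le

lemma starConvex_image (hf : IsStarlike f) : StarConvex ℝ 0 (f '' ball 0 1) := by
  rw [starConvex_zero_iff]
  rintro _ ⟨z, hz, rfl⟩ c hc0 hc1
  rcases hc0.eq_or_lt with rfl | hc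
  · exact ⟨0, mem_ball_self one_pos, by rw [hf.map_zero, zero_smul]⟩
  have hsub : Subord (fun x => c * f x) f :=
    subord_of_forall_lift_norm_le (hf.differentiableOn.const_mul _) hf.differentiableOn hf.injOn
      (fun _ => hf.deriv_ne_zero) (by simp [hf.map_zero])
      fun _ hr w _ hw _ hlift x hx =>
        hf.norm_le_of_eq_mul (hw hx) (ball_subset_ball hr.le hx) hc hc1 (hlift x hx)
  obtain ⟨w, -, -, hw, hfw⟩ := hsub
  exact ⟨w z, hw z hz, by rw [← hfw z hz, real_smul]⟩

end IsStarlike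

/-- Convex functions on the unit disk, by Alexander's criterion: `z G'(z)` is starlike. -/
structure IsConvexMap (G : ℂ → ℂ) : Prop where
  differentiableOn : DifferentiableOn ℂ G (ball 0 1)
  isStarlike : IsStarlike fun z => z * deriv G z

namespace IsConvexMap

variable {F G : ℂ → ℂ} {z : ℂ}

lemma deriv_mul_deriv_zero (hG : IsConvexMap G) : deriv (fun z => z * deriv G z) 0 = deriv G 0 := by
  have hG' := (hG.differentiableOn.deriv isOpen_ball).differentiableAt (ball_mem_nhds 0 one_pos)
  have hprod := (hasDerivAt_id' (0 : ℂ)).fun_mul hG'.hasDerivAt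
  rw [hprod.deriv, one_mul, zero_mul, add_zero]

lemma deriv_ne_zero (hG : IsConvexMap G) (hz : z ∈ ball 0 1) : deriv G z ≠ 0 := by
  rcases eq_or_ne z 0 with rfl | hz0
  · exact hG.deriv_mul_deriv_zero ▸ hG.isStarlike.deriv_zero_ne_zero
  · exact right_ne_zero_of_mul (hG.isStarlike.ne_zero hz hz0)

lemma re_deriv_div_deriv_pos (hG : IsConvexMap G) (hz : z ∈ ball 0 1) :
    0 < (deriv G z / deriv (fun z => z * deriv G z) z).re := by
  rcases eq_or_ne z 0 with rfl | hz0
  · rw [hG.deriv_mul_deriv_zero, div_self (hG.deriv_ne_zero hz), one_re]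
    exact one_pos
  · rw [re_div_pos_comm, ← mul_div_mul_left _ _ hz0]
    exact hG.isStarlike.re_pos z hz hz0

lemma re_sub_div_pos (hG : IsConvexMap G) (hz : z ∈ ball 0 1) (hz0 : z ≠ 0) :
    0 < ((G z - G 0) / (z * deriv G z)).re := by
  set H : ℂ → ℂ := fun z => z * deriv G z
  have hHstar : IsStarlike H := hG.isStarlike
  have h0ball : (0 : ℂ) ∈ ball 0 1 := mem_ball_self one_pos
  set k := Function.invFunOn H (ball 0 1)
  have hk {x : ℂ} (hx : x ∈ ball 0 1) : k (H x) = x := hHstar.injOn.leftInvOn_invFunOn hx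
  have hderiv (ζ) (hζ : ζ ∈ H '' ball 0 1) :
      HasDerivAt (G ∘ k) (deriv G (k ζ) / deriv H (k ζ)) ζ := by
    obtain ⟨x, hx, rfl⟩ := hζ
    have hGx := (hG.differentiableOn.differentiableAt (isOpen_ball.mem_nhds hx)).hasDerivAt
    have hkx := hasDerivAt_invFunOn isOpen_ball hHstar.differentiableOn hHstar.injOn hx
      (hHstar.deriv_ne_zero hx)
    rw [div_eq_mul_inv, hk hx]
    exact HasDerivAt.comp (H x) (by rwa [hk hx]) hkx
  have hseg : segment ℝ 0 (H z) ⊆ H '' ball 0 1 :=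
    hHstar.starConvex_image.segment_subset (mem_image_of_mem H hz)
  have hpos := re_sub_mul_conj_sub_pos (hHstar.ne_zero hz hz0) (fun ζ hζ => hderiv ζ (hseg hζ))
    fun ζ hζ => hG.re_deriv_div_deriv_pos (Function.invFunOn_mem (hseg hζ))
  have hk0 : k 0 = 0 := by simpa only [hHstar.map_zero] using hk h0ball
  rwa [sub_zero, Function.comp_apply, Function.comp_apply, hk hz, hk0, ← re_div_pos_iff] at hpos

lemma isStarlike_sub (hG : IsConvexMap G) : IsStarlike fun z => G z - G 0 where
  differentiableOn := hG.differentiableOn.sub_const _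
  map_zero := sub_self _
  deriv_zero_ne_zero := by
    rw [deriv_sub_const]
    exact hG.deriv_ne_zero (mem_ball_self one_pos)
  re_pos z hz hz0 := by
    rw [deriv_sub_const, re_div_pos_comm]
    exact hG.re_sub_div_pos hz hz0

lemma injOn (hG : IsConvexMap G) : InjOn G (ball 0 1) := fun _ hz _ hw hzw =>
  hG.isStarlike_sub.injOn hz hw (congrArg (· - G 0) hzw)

lemma norm_lift_le (hG : IsConvexMap G)
    (hsub : Subord (fun z => z * deriv F z) (fun z => z * deriv G z))
    {r : ℝ} (hr : r ≤ 1) {w : ℂ → ℂ} (hw : DifferentiableOn ℂ w (ball 0 r))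
    (hwmaps : MapsTo w (ball 0 r) (ball 0 1)) (hw0 : w 0 = 0)
    (hGw : ∀ x ∈ ball 0 r, G (w x) = F x) (hz : z ∈ ball 0 r) : ‖w z‖ ≤ ‖z‖ := by
  by_contra! hlt
  obtain ⟨z₀, hz₀, hz₀lt, k, hk, hjack⟩ := exists_norm_lt_and_mul_deriv_eq hw hw0 hz hlt
  have hz₀ball : z₀ ∈ ball 0 1 := ball_subset_ball hr hz₀
  obtain ⟨u, hu, hFu⟩ := hsub.exists_norm_le hz₀ball
  have hk0 : (k : ℂ) ≠ 0 := by exact_mod_cast (one_pos.trans_le hk).ne'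
  have hderivF : deriv F z₀ = deriv G (w z₀) * deriv w z₀ := by
    have hnhds : ball 0 r ∈ 𝓝 z₀ := isOpen_ball.mem_nhds hz₀
    have hF : F =ᶠ[𝓝 z₀] G ∘ w := by
      filter_upwards [hnhds] with x hx using (hGw x hx).symm
    rw [hF.deriv_eq]
    exact deriv_comp z₀
      (hG.differentiableOn.differentiableAt (isOpen_ball.mem_nhds (hwmaps hz₀)))
      (hw.differentiableAt hnhds)
  have hradial : w z₀ * deriv G (w z₀) = (k⁻¹ : ℝ) * (u * deriv G u) := by
    have hkw : k * (w z₀ * deriv G (w z₀)) = u * deriv G u := by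
      calc k * (w z₀ * deriv G (w z₀)) = z₀ * deriv w z₀ * deriv G (w z₀) := by rw [hjack]; ring
        _ = z₀ * deriv F z₀ := by rw [hderivF]; ring
        _ = u * deriv G u := hFu
    rw [← hkw, ofReal_inv, inv_mul_cancel_left₀ hk0]
  have huball : u ∈ ball 0 1 := mem_ball_zero_iff.2 (hu.trans_lt (mem_ball_zero_iff.1 hz₀ball))
  have hwu : ‖w z₀‖ ≤ ‖u‖ := hG.isStarlike.norm_le_of_eq_mul (hwmaps hz₀) huball
    (inv_pos.2 (one_pos.trans_le hk)) (inv_le_one_of_one_le₀ hk) hradial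
  exact (hwu.trans hu).not_gt hz₀lt

end IsConvexMap

theorem suffridge_lemma (F G : ℂ → ℂ)
    (hF : DifferentiableOn ℂ F (ball (0 : ℂ) 1))
    (hG : DifferentiableOn ℂ G (ball (0 : ℂ) 1))
    (h0 : F 0 = G 0)
    (H : ℂ → ℂ) (hH : ∀ z : ℂ, H z = z * deriv G z)
    (hHinj : Set.InjOn H (ball (0 : ℂ) 1))
    (hH0 : H 0 = 0) (hH0' : deriv H 0 ≠ 0)
    (hstar : ∀ z ∈ ball (0 : ℂ) 1, z ≠ 0 → 0 < (z * deriv H z / H z).re)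
    (hsub : Subord (fun z => z * deriv F z) (fun z => z * deriv G z)) :
    Subord F G := by
  obtain rfl : H = fun z => z * deriv G z := funext hH
  have hHdiff : DifferentiableOn ℂ (fun z => z * deriv G z) (ball 0 1) :=
    differentiableOn_id.mul (hG.deriv isOpen_ball)
  have hconvex : IsConvexMap G := ⟨hG, hHdiff, hH0, hH0', hstar⟩
  exact subord_of_forall_lift_norm_le hF hG hconvex.injOn (fun _ => hconvex.deriv_ne_zero) h0
    fun _ hr _ hw hwmaps hw0 hGw _ => hconvex.norm_lift_le hsub hr.le hw hwmaps hw0 hGw
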